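/- arXiv:2104.01354 — 2 statements merged into one kernel-verified Lean document; each statement's English description precedes it below -/
import Mathlib

section
/- Let α ≤ β ≤ −1 be negative integers, let N be a real number that is not a nonpositive integer, and let M = (M_i)_{i≥0} be real parameters with M_i ∉ {0,1}. Then for every integer f with −α ≤ f ≤ −α−β−1, the limit lim_{s→0} (1/s)·h_f^{α+s/M_{α+f}, β−s, N}(x) exists for every x, and Ĥ_f^{α,β,N;M}(x) = (M_{α+f}/(M_{α+f}−1)) · lim_{s→0} (1/s)·h_f^{α+s/M_{α+f}, β−s, N}(x). -/
open Finset MeasureTheory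

noncomputable section ExceptionalHahnJacobi

/-- Pochhammer symbol `(z)_m = z (z+1) ⋯ (z+m-1)`. -/
def poch (z : ℝ) (m : ℕ) : ℝ := ∏ i ∈ Finset.range m, (z + (i : ℝ))

/-- Pochhammer symbol with integer exponent; `(z)_{-k} = 1 / ((z-1)(z-2)⋯(z-k))`. -/
def pochZ (z : ℝ) (m : ℤ) : ℝ :=
  if 0 ≤ m then poch z m.toNat else 1 / poch (z - ((-m).toNat : ℝ)) (-m).toNat

/-- Generalized binomial coefficient `C(z, k) = z(z-1)⋯(z-k+1)/k!`. -/
def genBinom (z : ℝ) (k : ℕ) : ℝ := (∏ i ∈ Finset.range k, (z - (i : ℝ))) / (k.factorial : ℝ)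

/-- `λ^{a,b}(x) = x (x + a + b + 1)`. -/
def lam (a b x : ℝ) : ℝ := x * (x + a + b + 1)

/-- Hahn polynomial `h_n^{a,b,N}(x)`. -/
def hahn (a b N : ℝ) (n : ℕ) (x : ℝ) : ℝ :=
  ∑ j ∈ Finset.range (n + 1),
    poch (-(n : ℝ)) j * poch (a + b + (n : ℝ) + 1) j * poch (-N + (j : ℝ)) (n - j) *
      poch (a + (j : ℝ) + 1) (n - j) * poch (-x) j / (j.factorial : ℝ)

/-- Dual Hahn polynomial `R_n^{a,b,N}(x)`. -/
def dualHahn (a b N : ℝ) (n : ℕ) (x : ℝ) : ℝ :=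
  ∑ j ∈ Finset.range (n + 1),
    poch (-(n : ℝ)) j * poch (-N + (j : ℝ)) (n - j) * poch (a + (j : ℝ) + 1) (n - j) /
        ((n.factorial : ℝ) * (-1 : ℝ) ^ j * (j.factorial : ℝ)) *
      ∏ i ∈ Finset.range j, (x - (i : ℝ) * (a + b + 1 + (i : ℝ)))

/-- Dual Hahn polynomial with integer degree; zero for negative degree. -/
def dualHahnZ (a b N : ℝ) (m : ℤ) (x : ℝ) : ℝ :=
  if 0 ≤ m then dualHahn a b N m.toNat x else 0

/-- Jacobi polynomial `P_n^{a,b}(x)`. -/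
def jacobiP (a b : ℝ) (n : ℕ) (x : ℝ) : ℝ :=
  (2 : ℝ)⁻¹ ^ n * ∑ j ∈ Finset.range (n + 1),
    genBinom ((n : ℝ) + a) j * genBinom ((n : ℝ) + b) (n - j) * (x - 1) ^ (n - j) * (x + 1) ^ j

/-- The function `φ_u^{α,β,N}(s,x)`, a normalized terminating ₃F₂. -/
def phiH (α β : ℤ) (N : ℝ) (u : ℕ) (s x : ℝ) : ℝ :=
  poch ((α : ℝ) + 1) (max u (-α - β - (u : ℤ) - 1).toNat) *
    poch (-N) (max u (-α - β - (u : ℤ) - 1).toNat) *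
    ∑ j ∈ Finset.range (u + 1),
      poch (-(u : ℝ)) j * poch ((u : ℝ) - s + (α : ℝ) + (β : ℝ) + 1) j * poch (-x) j /
        (poch ((α : ℝ) - s + 1) j * poch (-N) j * (j.factorial : ℝ))

/-- The polynomials `Ĥ_n^{α,β,N;M}(x)`. -/
def Hhat (α β : ℤ) (N : ℝ) (M : ℕ → ℝ) (n : ℕ) (x : ℝ) : ℝ :=
  if ⌈((-α - β : ℤ) : ℚ) / 2⌉ ≤ (n : ℤ) ∧ (n : ℤ) ≤ -α - 1 then
    deriv (fun s => phiH α β N n s x) 0 -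
      deriv (fun s => phiH α β N (-α - β - (n : ℤ) - 1).toNat s x) 0
  else if -α ≤ (n : ℤ) ∧ (n : ℤ) ≤ -α - β - 1 then
    (-1 : ℝ) ^ ((β : ℤ) + (n : ℤ)) * ((β + (n : ℤ)).toNat.factorial : ℝ) *
      (((-α - β - (n : ℤ) - 1).toNat.factorial : ℝ) * poch (-x) (-α).toNat *
          hahn (-(α : ℝ)) (β : ℝ) ((α : ℝ) + N) ((α + (n : ℤ)).toNat) (x + (α : ℝ)) +
        (((α + (n : ℤ)).toNat.factorial : ℝ)) *
            poch (-N - (α : ℝ) - (β : ℝ) - (n : ℝ) - 1) (2 * (n : ℤ) + α + β + 1).toNat /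
            (M ((α + (n : ℤ)).toNat) - 1) *
          hahn (α : ℝ) (β : ℝ) N ((-α - β - (n : ℤ) - 1).toNat) x)
  else hahn (α : ℝ) (β : ℝ) N n x

/-- The function `φ_u^{α,β}(s,x)`, a normalized terminating ₂F₁. -/
def phiJ (α β : ℤ) (u : ℕ) (s x : ℝ) : ℝ :=
  poch ((α : ℝ) + 1) (max u (-α - β - (u : ℤ) - 1).toNat) /
      ((max u.factorial (-α - β - (u : ℤ) - 1).toNat.factorial : ℕ) : ℝ) *
    ∑ j ∈ Finset.range (u + 1),
      poch (-(u : ℝ)) j * poch ((u : ℝ) - s + (α : ℝ) + (β : ℝ) + 1) j /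
          (poch ((α : ℝ) - s + 1) j * (j.factorial : ℝ)) * ((1 - x) / 2) ^ j

/-- The polynomials `P̂_n^{α,β;M}(x)`. -/
def Phat (α β : ℤ) (M : ℕ → ℝ) (n : ℕ) (x : ℝ) : ℝ :=
  if ⌈((-α - β : ℤ) : ℚ) / 2⌉ ≤ (n : ℤ) ∧ (n : ℤ) ≤ -α - 1 then
    deriv (fun s => phiJ α β n s x) 0 -
      deriv (fun s => phiJ α β (-α - β - (n : ℤ) - 1).toNat s x) 0
  else if -α ≤ (n : ℤ) ∧ (n : ℤ) ≤ -α - β - 1 then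
    (-1 : ℝ) ^ ((β : ℤ) + (n : ℤ)) *
      ((((n : ℤ) + α).toNat.factorial : ℝ) * (((n : ℤ) + β).toNat.factorial : ℝ) *
        ((-α - β - (n : ℤ) - 1).toNat.factorial : ℝ)) / (n.factorial : ℝ) *
      ((M ((α + (n : ℤ)).toNat) - 1)⁻¹ * jacobiP (α : ℝ) (β : ℝ) ((-α - β - (n : ℤ) - 1).toNat) x +
        ((1 - x) / 2) ^ (-α).toNat * jacobiP (-(α : ℝ)) (β : ℝ) ((α + (n : ℤ)).toNat) x)
  else jacobiP (α : ℝ) (β : ℝ) n x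

/-- `u_F = Σ_{f ∈ F} f - C(n_F + 1, 2)`. -/
def uF (F : Finset ℕ) : ℕ := (∑ f ∈ F, f) - (F.card + 1).choose 2

/-- `n ∈ σ_F = {u_F, u_F + 1, …} \ {u_F + f : f ∈ F}`. -/
def inSigma (F : Finset ℕ) (n : ℕ) : Prop := uF F ≤ n ∧ n - uF F ∉ F

/-- The `i`-th element of `F` in increasing order. -/
def elemOf (F : Finset ℕ) (i : Fin F.card) : ℕ := ((F.orderIsoOfFin rfl i : {x // x ∈ F}) : ℕ)

/-- The `i`-th element of a finite set of integers, in increasing order. -/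
def elemOfZ (S : Finset ℤ) (i : Fin S.card) : ℤ := ((S.orderIsoOfFin rfl i : {x // x ∈ S}) : ℤ)

/-- Exceptional Hahn polynomial `h_n^{α,β,N;M,F}(x)`. -/
def exHahn (α β : ℤ) (N : ℝ) (M : ℕ → ℝ) (F : Finset ℕ) (n : ℕ) (x : ℝ) : ℝ :=
  Matrix.det (Matrix.of fun i j : Fin (F.card + 1) =>
    Fin.cases (Hhat α β N M (n - uF F) (x + ((j : ℕ) : ℝ)))
      (fun k => Hhat α β N M (elemOf F k) (x + ((j : ℕ) : ℝ))) i)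

/-- The polynomial `Ω_{M,F}^{α,β,N}(x)`. -/
def OmegaH (α β : ℤ) (N : ℝ) (M : ℕ → ℝ) (F : Finset ℕ) (x : ℝ) : ℝ :=
  Matrix.det (Matrix.of fun i j : Fin F.card =>
    Hhat α β N M (elemOf F i) (x + ((j : ℕ) : ℝ)))

/-- The polynomial `Λ_{M,F}^{α,β,N}(x)` (columns `j ∈ {1,…,n_F+1}`, `j ≠ n_F`). -/
def LambdaH (α β : ℤ) (N : ℝ) (M : ℕ → ℝ) (F : Finset ℕ) (x : ℝ) : ℝ :=
  Matrix.det (Matrix.of fun i j : Fin F.card =>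
    Hhat α β N M (elemOf F i)
      (x + ((if (j : ℕ) = F.card - 1 then F.card else (j : ℕ) : ℕ) : ℝ)))

/-- Exceptional Jacobi polynomial `P_n^{α,β;M,F}(x)`. -/
def exJacobi (α β : ℤ) (M : ℕ → ℝ) (F : Finset ℕ) (n : ℕ) (x : ℝ) : ℝ :=
  Matrix.det (Matrix.of fun i j : Fin (F.card + 1) =>
    Fin.cases (iteratedDeriv (j : ℕ) (Phat α β M (n - uF F)) x)
      (fun k => iteratedDeriv (j : ℕ) (Phat α β M (elemOf F k)) x) i)

/-- The polynomial `Ω_{M,F}^{α,β}(x)`. -/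
def OmegaJ (α β : ℤ) (M : ℕ → ℝ) (F : Finset ℕ) (x : ℝ) : ℝ :=
  Matrix.det (Matrix.of fun i j : Fin F.card =>
    iteratedDeriv (j : ℕ) (Phat α β M (elemOf F i)) x)

/-- `F_ext = F \ {-β, …, -α-β-1}`. -/
def Fext (α β : ℤ) (F : Finset ℕ) : Finset ℕ :=
  F.filter fun f : ℕ => ((f : ℤ) < -β ∨ -α - β ≤ (f : ℤ))

/-- Admissibility of the data `α, β, M, F`. -/
def IsAdmissible (α β : ℤ) (M : ℕ → ℝ) (F : Finset ℕ) : Prop :=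
  (∀ i : ℕ, (i : ℤ) ≤ -β - 1 → (∀ f ∈ F, (i : ℤ) ≠ -β - (f : ℤ) - 1) →
      Real.sign (M i) =
        Real.sign (∏ f ∈ Fext α β F, (((i : ℝ) - (f : ℝ) - (α : ℝ)) * ((i : ℝ) + (f : ℝ) + (β : ℝ) + 1)))) ∧
  (∀ x : ℤ, 0 ≤ x → (∃ f ∈ F, x ≤ (f : ℤ) + α + β) →
      0 ≤ ∏ f ∈ F.filter (fun f : ℕ => -α - β ≤ (f : ℤ)), (x - (f : ℤ) - α - β))

/-- `U_{F-} = {f + α + β : f ∈ F, 1 ≤ f ≤ -β-1}`. -/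
def UFm (α β : ℤ) (F : Finset ℕ) : Finset ℤ :=
  (F.filter fun f : ℕ => (1 ≤ f ∧ (f : ℤ) ≤ -β - 1)).image fun f : ℕ => (f : ℤ) + α + β

/-- `U_{F+} = {f + α + β : f ∈ F, f ≥ -α-β}`. -/
def UFp (α β : ℤ) (F : Finset ℕ) : Finset ℤ :=
  (F.filter fun f : ℕ => -α - β ≤ (f : ℤ)).image fun f : ℕ => (f : ℤ) + α + β

/-- `U_F = U_{F-} ∪ U_{F+}`. -/
def UF (α β : ℤ) (F : Finset ℕ) : Finset ℤ := UFm α β F ∪ UFp α β F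

/-- The weight of the measure `ω_{α,β,N}^{M,F}` at the point `x`. -/
def wH (α β : ℤ) (N : ℕ) (M : ℕ → ℝ) (F : Finset ℕ) (x : ℕ) : ℝ :=
  genBinom ((α : ℝ) + (F.card : ℝ) + (x : ℝ)) x *
      genBinom ((β : ℝ) + (N : ℝ) - (x : ℝ)) (N - F.card - x) /
    (OmegaH α β (N : ℝ) M F (x : ℝ) * OmegaH α β (N : ℝ) M F ((x : ℝ) + 1))

/-- The weight `ω_{α,β;M,F}(x)` on `[-1,1]`. -/
def wJ (α β : ℤ) (M : ℕ → ℝ) (F : Finset ℕ) (x : ℝ) : ℝ :=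
  (1 - x) ^ (α + (F.card : ℤ)) * (1 + x) ^ (β + (F.card : ℤ)) / (OmegaJ α β M F x) ^ 2

/-- The measure on `[-1,1]` with density `ω_{α,β;M,F}`. -/
def jacobiMeasure (α β : ℤ) (M : ℕ → ℝ) (F : Finset ℕ) : Measure ℝ :=
  (volume.restrict (Set.Icc (-1 : ℝ) 1)).withDensity fun x => ENNReal.ofReal (wJ α β M F x)

/-- Mass of the dual Hahn measure `ρ_{b,a,N̂}` at `λ^{a,b}(x)`. -/
def rhoMass (a b Nh : ℤ) (x : ℕ) : ℝ :=
  (2 * (x : ℝ) + (a : ℝ) + (b : ℝ) + 1) * poch ((b : ℝ) + 1) x * poch (-(Nh : ℝ)) x *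
      (Nh.toNat.factorial : ℝ) /
    ((-1 : ℝ) ^ x * poch ((x : ℝ) + (a : ℝ) + (b : ℝ) + 1) (Nh + 1).toNat *
      poch ((a : ℝ) + 1) x * (x.factorial : ℝ))

/-- Mass of the measure `ν_{a,b,N̂}^{M}` at `λ^{a,b}(s)`. -/
def nuMass (a b Nh : ℤ) (M : ℕ → ℝ) (s : ℤ) : ℝ :=
  if -b ≤ s ∧ s ≤ -1 then
    (2 * (s : ℝ) + (a : ℝ) + (b : ℝ) + 1) * poch ((Nh : ℝ) + 1 - (s : ℝ)) (s + b).toNat /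
        poch ((Nh : ℝ) + (b : ℝ) + 1) (s + a + 1).toNat * M ((s + b).toNat)
  else if 0 ≤ s ∧ s ≤ Nh then
    poch ((Nh : ℝ) + 1) b.toNat ^ 2 / poch ((b : ℝ) + 1) (a - b).toNat * rhoMass a b Nh s.toNat /
      ∏ i ∈ Finset.range b.toNat, (((s : ℝ) + (a : ℝ) + (i : ℝ) + 1) * ((s : ℝ) + (b : ℝ) - (i : ℝ)))
  else 0

/-- `ζ_v` (defined for any integer `v` via `pochZ`). -/
def zetaH (α β : ℤ) (N : ℝ) (v : ℤ) : ℝ :=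
  pochZ (-N - (α : ℝ) - (β : ℝ)) v * poch ((v : ℝ) + 1) (-α).toNat *
    ((v - α - β).toNat.factorial : ℝ)

/-- `θ_v^M`. -/
def thetaM (β : ℤ) (M : ℕ → ℝ) (v : ℕ) : ℝ :=
  if (v : ℤ) ≤ -β - 1 then 1 - M ((-β - 1 - (v : ℤ)).toNat) else 1

/-- `τ_v = ∏_{u ∈ U_F} (λ^{a,b}(v+α+β) - λ^{a,b}(u))` with `a = -α`, `b = -β`. -/
def tauH (α β : ℤ) (F : Finset ℕ) (v : ℕ) : ℝ :=
  ∏ u ∈ UF α β F,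
    (lam ((-α : ℤ) : ℝ) ((-β : ℤ) : ℝ) ((v : ℝ) + (α : ℝ) + (β : ℝ)) -
      lam ((-α : ℤ) : ℝ) ((-β : ℤ) : ℝ) ((u : ℤ) : ℝ))

/-- `ξ_n`. -/
def xiH (α β : ℤ) (N : ℝ) (F : Finset ℕ) (n : ℕ) : ℝ :=
  pochZ (N - (n : ℝ) + 1) ((n : ℤ) + α + β) ^ (α + (F.card : ℤ) + 1) *
    ∏ j ∈ Finset.range (F.card + 1), poch (N - (n : ℝ) - (j : ℝ) + 1) j

/-- `κ_M`. -/
def kappaM (α β : ℤ) (N : ℝ) (M : ℕ → ℝ) (F : Finset ℕ) : ℝ :=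
  (∏ u ∈ UFm α β F, (1 - M ((-u + α - 1).toNat))) * ∏ u ∈ UF α β F, zetaH α β N u

/-- Entry `(i,j)` (0-based) of the determinant defining `q_n^{a,b,N̂;M,U_F}`. -/
def qEntry (α β : ℤ) (N : ℝ) (M : ℕ → ℝ) (F : Finset ℕ) (n : ℕ) (x : ℝ) (i j : ℕ) : ℝ :=
  if i = 0 then
    (-1 : ℝ) ^ j * dualHahnZ (((-α).toNat : ℝ)) (((-β).toNat : ℝ)) (N + (α : ℝ) + (β : ℝ))
      ((n : ℤ) - (-α).toNat + j) x
  else if h1 : i - 1 < (UFm α β F).card then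
    (-1 : ℝ) ^ j * dualHahnZ (((-α).toNat : ℝ)) (((-β).toNat : ℝ)) (N + (α : ℝ) + (β : ℝ))
      ((n : ℤ) - (-α).toNat + j)
      (lam (((-α).toNat : ℝ)) (((-β).toNat : ℝ)) ((elemOfZ (UFm α β F) ⟨i - 1, h1⟩ : ℤ) : ℝ))
  else if i - 1 - (UFm α β F).card < (-α).toNat then
    poch (((-α).toNat : ℝ) + ((-β).toNat : ℝ) + (N + (α : ℝ) + (β : ℝ)) - (n : ℝ) - (j : ℝ) + 1) j *
      Hhat α β (-2 - (N + (α : ℝ) + (β : ℝ))) M ((-β).toNat + (i - 1 - (UFm α β F).card))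
        (-(n : ℝ) + ((-α).toNat : ℝ) - (j : ℝ) - 1)
  else if h3 : i - 1 - (UFm α β F).card - (-α).toNat < (UFp α β F).card then
    (-1 : ℝ) ^ j * dualHahnZ (((-α).toNat : ℝ)) (((-β).toNat : ℝ)) (N + (α : ℝ) + (β : ℝ))
      ((n : ℤ) - (-α).toNat + j)
      (lam (((-α).toNat : ℝ)) (((-β).toNat : ℝ))
        ((elemOfZ (UFp α β F) ⟨i - 1 - (UFm α β F).card - (-α).toNat, h3⟩ : ℤ) : ℝ))
  else 0

/-- The Krall dual Hahn orthogonal polynomial `q_n^{a,b,N̂;M,U_F}(x)`. -/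
def qKrall (α β : ℤ) (N : ℝ) (M : ℕ → ℝ) (F : Finset ℕ) (n : ℕ) (x : ℝ) : ℝ :=
  Matrix.det (Matrix.of fun i j : Fin (1 + (UFm α β F).card + (-α).toNat + (UFp α β F).card) =>
      qEntry α β N M F n x (i : ℕ) (j : ℕ)) /
    ((-1 : ℝ) ^ ((n + (-α).toNat + (-β).toNat) * ((UF α β F).card + 1) +
        ((-α).toNat + (-β).toNat).choose 2 + ((-β).toNat).choose 2 + (-α).toNat) *
      ∏ u ∈ UF α β F, (x - lam (((-α).toNat : ℝ)) (((-β).toNat : ℝ)) ((u : ℤ) : ℝ)))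

/-- Row used in the renormalized determinant `P̄`: for `-α ≤ g ≤ -α-β-1` it is
`(M_{α+g} - 1) · P̂_g` written without the division by `M_{α+g} - 1`. -/
def PhatBarRow (α β : ℤ) (M : ℕ → ℝ) (g : ℕ) (x : ℝ) : ℝ :=
  if -α ≤ (g : ℤ) ∧ (g : ℤ) ≤ -α - β - 1 then
    (-1 : ℝ) ^ ((β : ℤ) + (g : ℤ)) *
      ((((g : ℤ) + α).toNat.factorial : ℝ) * (((g : ℤ) + β).toNat.factorial : ℝ) *
        ((-α - β - (g : ℤ) - 1).toNat.factorial : ℝ)) / (g.factorial : ℝ) *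
      (jacobiP (α : ℝ) (β : ℝ) ((-α - β - (g : ℤ) - 1).toNat) x +
        (M ((α + (g : ℤ)).toNat) - 1) * ((1 - x) / 2) ^ (-α).toNat *
          jacobiP (-(α : ℝ)) (β : ℝ) ((α + (g : ℤ)).toNat) x)
  else Phat α β M g x

/-- The renormalized exceptional Jacobi polynomial
`P̄_n^{α,β;M,F} = (∏_{i=0}^{-β-1} (M_i - 1)) · P_n^{α,β;M,F}`
(written so that the factors `M_i - 1` are distributed into the corresponding rows of the
determinant; this agrees with the product formula whenever all `M_i ≠ 1`). -/
def Pbar (α β : ℤ) (M : ℕ → ℝ) (F : Finset ℕ) (n : ℕ) (x : ℝ) : ℝ :=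
  (∏ i ∈ (Finset.range (-β).toNat).filter
      (fun i : ℕ => (((i : ℤ) - α).toNat ∉ F ∧ ((i : ℤ) - α).toNat ≠ n - uF F)), (M i - 1)) *
    Matrix.det (Matrix.of fun r j : Fin (F.card + 1) =>
      Fin.cases (iteratedDeriv (j : ℕ) (PhatBarRow α β M (n - uF F)) x)
        (fun k => iteratedDeriv (j : ℕ) (PhatBarRow α β M (elemOf F k)) x) r)

end ExceptionalHahnJacobi

theorem poch_cont' (m : ℕ) {g : ℝ → ℝ} (hg : Continuous g) : Continuous fun s => poch (g s) m := by
  unfold poch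
  exact continuous_finsetProd _ fun i _ => hg.add continuous_const

theorem poch_add' (z : ℝ) (a b : ℕ) : poch z (a + b) = poch z a * poch (z + a) b := by
  unfold poch
  rw [Finset.prod_range_add]
  congr 1
  refine Finset.prod_congr rfl fun i _ => ?_
  push_cast; ring

theorem poch_one' (z : ℝ) : poch z 1 = z := by simp [poch]

theorem poch_zero' (z : ℝ) : poch z 0 = 1 := by simp [poch]

/-- factor out the vanishing factor -/
theorem poch_split' (e : ℝ) (K i : ℕ) :
    poch (-(K : ℝ) + e) (K + 1 + i) = poch (-(K : ℝ) + e) K * e * poch (1 + e) i := by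
  rw [poch_add', poch_add', poch_one']
  push_cast
  rw [show -(K : ℝ) + e + K = e by ring, show -(K : ℝ) + e + (K + 1) = 1 + e by ring]

theorem poch_nat' (n j : ℕ) : poch ((n : ℝ) + 1) j = ((n + j).factorial : ℝ) / n.factorial := by
  induction j with
  | zero => rw [poch_zero', Nat.add_zero, div_self (by positivity)]
  | succ j ih =>
    rw [poch_add', ih, poch_one', ← Nat.add_assoc, Nat.factorial_succ]
    push_cast; ring

theorem poch_neg' (n j : ℕ) :
    poch (-((n : ℝ) + j)) j = (-1) ^ j * ((n + j).factorial : ℝ) / n.factorial := by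
  have h : poch (-((n : ℝ) + j)) j = (-1) ^ j * poch ((n : ℝ) + 1) j := by
    unfold poch
    rw [← Finset.prod_range_reflect]
    have : ((-1 : ℝ)) ^ j = ∏ i ∈ Finset.range j, (-1 : ℝ) := by simp
    rw [this, ← Finset.prod_mul_distrib]
    refine Finset.prod_congr rfl fun i hi => ?_
    have hi := Finset.mem_range.1 hi
    rw [Nat.sub_sub, Nat.cast_sub (by omega)]
    push_cast; ring
  rw [h, poch_nat']; ring

theorem core' (m k r : ℕ) (N M x : ℝ) (hM0 : M ≠ 0) (hM1 : M ≠ 1) :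
    Filter.Tendsto
      (fun s : ℝ => s⁻¹ * hahn (-((k + r + 1 : ℕ) : ℝ) + s / M) (-((m + k + 1 : ℕ) : ℝ) - s) N
        (k + r + 1 + m) x)
      (nhdsWithin 0 {s : ℝ | s ≠ 0})
      (nhds ((M - 1) / M * ((-1) ^ r * (r.factorial : ℝ) *
        ((k.factorial : ℝ) * poch (-x) (k + r + 1) *
          hahn ((k + r + 1 : ℕ) : ℝ) (-((m + k + 1 : ℕ) : ℝ)) (-((k + r + 1 : ℕ) : ℝ) + N) m
            (x + -((k + r + 1 : ℕ) : ℝ)) +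
        (m.factorial : ℝ) * poch (-N + k) (r + 1 + m) / (M - 1) *
          hahn (-((k + r + 1 : ℕ) : ℝ)) (-((m + k + 1 : ℕ) : ℝ)) N k x)))) := by
  have hM1' : M - 1 ≠ 0 := sub_ne_zero.2 hM1
  let c : ℝ := 1 / M - 1
  let f : ℕ := k + r + 1 + m
  let G1 : ℝ → ℕ → ℝ := fun s j =>
    poch (-(f : ℝ)) j * poch (-(k : ℝ) + s * c) j * poch (-N + (j : ℝ)) (f - j) *
      (poch (-((k - j + r : ℕ) : ℝ) + s / M) (k - j + r) * (1 / M) * poch (1 + s / M) m) *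
      poch (-x) j / (j.factorial : ℝ)
  let G2 : ℝ → ℕ → ℝ := fun s i =>
    poch (-(f : ℝ)) (k + 1 + i) * (poch (-(k : ℝ) + s * c) k * c * poch (1 + s * c) i) *
      poch (-N + ((k + 1 + i : ℕ) : ℝ)) (f - (k + 1 + i)) *
      (s * (poch (-((r - 1 - i : ℕ) : ℝ) + s / M) (r - 1 - i) * (1 / M) * poch (1 + s / M) m)) *
      poch (-x) (k + 1 + i) / ((k + 1 + i).factorial : ℝ)
  let G3 : ℝ → ℕ → ℝ := fun s i =>
    poch (-(f : ℝ)) (k + 1 + r + i) * (poch (-(k : ℝ) + s * c) k * c * poch (1 + s * c) (r + i)) *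
      poch (-N + ((k + 1 + r + i : ℕ) : ℝ)) (f - (k + 1 + r + i)) *
      poch ((i : ℝ) + 1 + s / M) (m - i) *
      poch (-x) (k + 1 + r + i) / ((k + 1 + r + i).factorial : ℝ)
  let G : ℝ → ℝ := fun s => ∑ j ∈ Finset.range (k + 1), G1 s j + ∑ i ∈ Finset.range r, G2 s i +
    ∑ i ∈ Finset.range (m + 1), G3 s i
  have hG : ∀ s, hahn (-((k + r + 1 : ℕ) : ℝ) + s / M) (-((m + k + 1 : ℕ) : ℝ) - s) N f x
      = s * G s := by
    intro s
    unfold hahn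
    rw [show f + 1 = (k + 1) + r + (m + 1) by simp only [f]; omega, Finset.sum_range_add,
      Finset.sum_range_add]
    simp only [G, mul_add, Finset.mul_sum]
    have hc : -((k + r + 1 : ℕ) : ℝ) + s / M + (-((m + k + 1 : ℕ) : ℝ) - s) + (f : ℝ) + 1
        = -(k : ℝ) + s * c := by
      simp only [f, c]; push_cast; field_simp; ring
    rw [hc]
    congr 1
    · congr 1
      · refine Finset.sum_congr rfl fun j hj => ?_
        have hj := Finset.mem_range.1 hj
        obtain ⟨l, rfl⟩ : ∃ l, k = j + l := ⟨k - j, by omega⟩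
        have h1 : f - j = (j + l - j + r) + 1 + m := by simp only [f]; omega
        have h2 : -((j + l + r + 1 : ℕ) : ℝ) + s / M + (j : ℝ) + 1
            = -((j + l - j + r : ℕ) : ℝ) + s / M := by
          rw [Nat.add_sub_cancel_left]; push_cast; ring
        have h3 : poch (-((j + l + r + 1 : ℕ) : ℝ) + s / M + (j : ℝ) + 1) (f - j) = 
            poch (-((j + l - j + r : ℕ) : ℝ) + s / M) (j + l - j + r) * (s / M) * 
              poch (1 + s / M) m := by rw [h2, h1, poch_split']
        rw [h3]
        simp only [G1]; ring
      · refine Finset.sum_congr rfl fun i hi => ?_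
        have hi := Finset.mem_range.1 hi
        obtain ⟨l, rfl⟩ : ∃ l, r = i + 1 + l := ⟨r - 1 - i, by omega⟩
        have e : i + 1 + l - 1 - i = l := by omega
        have h1 : f - (k + 1 + i) = l + 1 + m := by simp only [f]; omega
        have h2 : -((k + (i + 1 + l) + 1 : ℕ) : ℝ) + s / M + ((k + 1 + i : ℕ) : ℝ) + 1
            = -(l : ℝ) + s / M := by
          push_cast; ring
        have h3 : poch (-((k + (i + 1 + l) + 1 : ℕ) : ℝ) + s / M + ((k + 1 + i : ℕ) : ℝ) + 1)
            (f - (k + 1 + i)) = poch (-(l : ℝ) + s / M) l * (s / M) * poch (1 + s / M) m := by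
          rw [h2, h1, poch_split']
        rw [h3, poch_split']
        simp only [G2, e]; ring
    · refine Finset.sum_congr rfl fun i hi => ?_
      have hi := Finset.mem_range.1 hi
      have h1 : f - (k + 1 + r + i) = m - i := by simp only [f]; omega
      have h2 : -((k + r + 1 : ℕ) : ℝ) + s / M + ((k + 1 + r + i : ℕ) : ℝ) + 1
            = (i : ℝ) + 1 + s / M := by
          push_cast; ring
      have h3 : poch (-(k : ℝ) + s * c) (k + 1 + r + i) =
          poch (-(k : ℝ) + s * c) k * (s * c) * poch (1 + s * c) (r + i) := by
        rw [Nat.add_assoc (k + 1), poch_split']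
      rw [h3, h2]
      simp only [G3, h1]; ring
  have hcont : Continuous G := by
    have a1 : ∀ (u v : ℝ) (n : ℕ), Continuous fun s : ℝ => poch (u + s * v) n := fun u v n =>
      poch_cont' n (by fun_prop)
    have a2 : ∀ (u v : ℝ) (n : ℕ), Continuous fun s : ℝ => poch (u + s / v) n := fun u v n =>
      poch_cont' n (by fun_prop)
    refine ((continuous_finsetSum _ fun j _ => ?_).add (continuous_finsetSum _ fun j _ => ?_)).add
      (continuous_finsetSum _ fun j _ => ?_)
    · have := a1 (-(k : ℝ)) c j
      have := a2 (-((k - j + r : ℕ) : ℝ)) M (k - j + r)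
      have := a2 1 M m
      simp only [G1]
      fun_prop
    · have := a1 (-(k : ℝ)) c k
      have := a1 1 c j
      have := a2 (-((r - 1 - j : ℕ) : ℝ)) M (r - 1 - j)
      have := a2 1 M m
      simp only [G2]
      fun_prop
    · have := a1 (-(k : ℝ)) c k
      have := a1 1 c (r + j)
      have := a2 ((j : ℝ) + 1) M (m - j)
      simp only [G3]
      fun_prop
  have hlim : Filter.Tendsto G (nhdsWithin 0 {s : ℝ | s ≠ 0}) (nhds (G 0)) :=
    (hcont.tendsto 0).mono_left nhdsWithin_le_nhds
  have hval : G 0 = (M - 1) / M * ((-1) ^ r * (r.factorial : ℝ) *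
        ((k.factorial : ℝ) * poch (-x) (k + r + 1) *
          hahn ((k + r + 1 : ℕ) : ℝ) (-((m + k + 1 : ℕ) : ℝ)) (-((k + r + 1 : ℕ) : ℝ) + N) m
            (x + -((k + r + 1 : ℕ) : ℝ)) +
        (m.factorial : ℝ) * poch (-N + k) (r + 1 + m) / (M - 1) *
          hahn (-((k + r + 1 : ℕ) : ℝ)) (-((m + k + 1 : ℕ) : ℝ)) N k x)) := by
    have g2 : ∑ i ∈ Finset.range r, G2 0 i = 0 := Finset.sum_eq_zero fun i _ => by simp [G2]
    have g1 : ∑ j ∈ Finset.range (k + 1), G1 0 j = (M - 1) / M * ((-1) ^ r * (r.factorial : ℝ) *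
        ((m.factorial : ℝ) * poch (-N + k) (r + 1 + m) / (M - 1) *
          hahn (-((k + r + 1 : ℕ) : ℝ)) (-((m + k + 1 : ℕ) : ℝ)) N k x)) := by
      unfold hahn
      simp only [Finset.mul_sum]
      refine Finset.sum_congr rfl fun j hj => ?_
      have hj := Finset.mem_range.1 hj
      obtain ⟨l, rfl⟩ : ∃ l, k = j + l := ⟨k - j, by omega⟩
      have e : j + l - j = l := by omega
      have e2 : f - j = l + (r + 1 + m) := by simp only [f]; omega
      simp only [G1, e, e2]
      rw [poch_add' _ l (r + 1 + m)]
      have p1 : -((j + l + r + 1 : ℕ) : ℝ) + -((m + (j + l) + 1 : ℕ) : ℝ) + ((j + l : ℕ) : ℝ) + 1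
          = -(f : ℝ) := by simp only [f]; push_cast; ring
      have p2 : -((j + l + r + 1 : ℕ) : ℝ) + (j : ℝ) + 1 = -((r : ℝ) + l) := by push_cast; ring
      have p3 : -N + (j : ℝ) + (l : ℝ) = -N + ((j + l : ℕ) : ℝ) := by push_cast; ring
      have p4 : poch (-((l + r : ℕ) : ℝ) + 0 / M) (l + r) = (-1) ^ (l + r) * ((l + r).factorial : ℝ) := by
        have := poch_neg' 0 (l + r)
        simpa using this
      have p5 : poch (1 + 0 / M) m = m.factorial := by
        have := poch_nat' 0 m
        simpa using this
      rw [p1, p2, p3, p4, p5, poch_neg', zero_mul, add_zero, Nat.add_comm r l, pow_add]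
      have : (r.factorial : ℝ) ≠ 0 := by positivity
      field_simp
    have g3 : ∑ j ∈ Finset.range (m + 1), G3 0 j = (M - 1) / M * ((-1) ^ r * (r.factorial : ℝ) *
        ((k.factorial : ℝ) * poch (-x) (k + r + 1) *
          hahn ((k + r + 1 : ℕ) : ℝ) (-((m + k + 1 : ℕ) : ℝ)) (-((k + r + 1 : ℕ) : ℝ) + N) m
            (x + -((k + r + 1 : ℕ) : ℝ)))) := by
      unfold hahn
      simp only [Finset.mul_sum]
      refine Finset.sum_congr rfl fun i hi => ?_
      have hi := Finset.mem_range.1 hi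
      obtain ⟨l, rfl⟩ : ∃ l, m = i + l := ⟨m - i, by omega⟩
      have e : i + l - i = l := by omega
      have e2 : f - (k + 1 + r + i) = l := by simp only [f]; omega
      have e3 : k + 1 + r + i = (k + r + 1) + i := by omega
      simp only [G3, e, e2]
      have q1 : ((k + r + 1 : ℕ) : ℝ) + -((i + l + k + 1 : ℕ) : ℝ) + ((i + l : ℕ) : ℝ) + 1
          = (r : ℝ) + 1 := by push_cast; ring
      have q2 : -(-((k + r + 1 : ℕ) : ℝ) + N) + (i : ℝ) = -N + ((k + 1 + r + i : ℕ) : ℝ) := by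
        push_cast; ring
      have q3 : ((k + r + 1 : ℕ) : ℝ) + (i : ℝ) + 1 = ((k + 1 + r + i : ℕ) : ℝ) + 1 := by
        push_cast; ring
      have q4 : -(x + -((k + r + 1 : ℕ) : ℝ)) = -x + ((k + r + 1 : ℕ) : ℝ) := by ring
      have q5 : poch (-(k : ℝ) + 0 * c) k = (-1) ^ k * (k.factorial : ℝ) := by
        have := poch_neg' 0 k
        simpa using this
      have q6 : poch (1 + 0 * c) (r + i) = (r + i).factorial := by
        have := poch_nat' 0 (r + i)
        simpa using this
      have q7 : -(f : ℝ) = -((l : ℝ) + ((k + 1 + r + i : ℕ) : ℝ)) := by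
        simp only [f]; push_cast; ring
      have q8 : -((i + l : ℕ) : ℝ) = -((l : ℝ) + (i : ℝ)) := by push_cast; ring
      have q9 : poch ((i : ℝ) + 1 + 0 / M) l = ((i + l).factorial : ℝ) / i.factorial := by
        rw [zero_div, add_zero, poch_nat']
      have q10 : poch (-x) (k + 1 + r + i) = poch (-x) (k + r + 1) *
          poch (-x + ((k + r + 1 : ℕ) : ℝ)) i := by rw [e3, poch_add']
      rw [q1, q2, q3, q4, q5, q6, q7, q8, q9, q10, poch_neg', poch_neg', poch_nat', poch_nat',
        Nat.add_comm l (k + 1 + r + i), Nat.add_comm l i]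
      have hs : ((-1 : ℝ)) ^ (k + 1 + r + i) = -((-1) ^ k * (-1) ^ r * (-1) ^ i) := by
        simp only [pow_add]; ring
      have hk : ((-1 : ℝ)) ^ k * (-1) ^ k = 1 := by rw [← mul_pow]; simp
      have hcc : c = -((M - 1) / M) := by simp only [c]; field_simp; ring
      rw [hs, hcc]
      have h1 : (r.factorial : ℝ) ≠ 0 := by positivity
      have h2 : (l.factorial : ℝ) ≠ 0 := by positivity
      have h3 : (i.factorial : ℝ) ≠ 0 := by positivity
      have h4 : ((k + 1 + r + i).factorial : ℝ) ≠ 0 := by positivity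
      generalize ((-1 : ℝ)) ^ k = y at *
      field_simp
      linear_combination (poch (-N + ((k + 1 + r + i : ℕ) : ℝ)) l * poch (-x) (k + r + 1) * poch (-x + ((k + r + 1 : ℕ) : ℝ)) i) * hk
    simp only [G]
    rw [g1, g2, g3]; ring
  rw [← hval]
  refine hlim.congr' ?_
  filter_upwards [self_mem_nhdsWithin] with s hs
  have hs : s ≠ 0 := hs
  have := hG s
  simp only [f] at this
  rw [this, inv_mul_cancel_left₀ hs]

/-- `Ĥ_f^{α,β,N;M}` as a limit of Hahn polynomials (middle range). -/
theorem Hhat_middle_as_limit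
    (α β : ℤ) (N : ℝ) (M : ℕ → ℝ)
    (hαβ : α ≤ β) (hβ : β ≤ -1)
    (hN : ∀ k : ℕ, N ≠ -(k : ℝ))
    (hM : ∀ i, M i ≠ 0 ∧ M i ≠ 1)
    (f : ℕ) (hf1 : -α ≤ (f : ℤ)) (hf2 : (f : ℤ) ≤ -α - β - 1) (x : ℝ) :
    Filter.Tendsto
      (fun s : ℝ => s⁻¹ * hahn ((α : ℝ) + s / M ((α + (f : ℤ)).toNat)) ((β : ℝ) - s) N f x)
      (nhdsWithin 0 {s : ℝ | s ≠ 0})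
      (nhds ((M ((α + (f : ℤ)).toNat) - 1) / M ((α + (f : ℤ)).toNat) * Hhat α β N M f x)) := by
  obtain ⟨m, hm⟩ : ∃ m : ℕ, (m : ℤ) = f + α := ⟨(f + α).toNat, by omega⟩
  obtain ⟨k, hk⟩ : ∃ k : ℕ, (k : ℤ) = -α - β - 1 - f := ⟨(-α - β - 1 - f).toNat, by omega⟩
  obtain ⟨r, hr⟩ : ∃ r : ℕ, (r : ℤ) = f + β := ⟨(f + β).toNat, by omega⟩
  obtain rfl : f = k + r + 1 + m := by omega
  obtain rfl : α = -((k + r + 1 : ℕ) : ℤ) := by omega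
  obtain rfl : β = -((m + k + 1 : ℕ) : ℤ) := by omega
  have e1 : (-((k + r + 1 : ℕ) : ℤ) + ((k + r + 1 + m : ℕ) : ℤ)).toNat = m := by omega
  have e2 : (- -((k + r + 1 : ℕ) : ℤ) - -((m + k + 1 : ℕ) : ℤ) - ((k + r + 1 + m : ℕ) : ℤ) - 1).toNat
      = k := by omega
  have e3 : -((m + k + 1 : ℕ) : ℤ) + ((k + r + 1 + m : ℕ) : ℤ) = r := by omega
  have e4 : (- -((k + r + 1 : ℕ) : ℤ)).toNat = k + r + 1 := by omega
  have e5 : (2 * ((k + r + 1 + m : ℕ) : ℤ) + -((k + r + 1 : ℕ) : ℤ) + -((m + k + 1 : ℕ) : ℤ) + 1).toNat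
      = r + 1 + m := by omega
  have e6 : -N - ((-((k + r + 1 : ℕ) : ℤ) : ℤ) : ℝ) - ((-((m + k + 1 : ℕ) : ℤ) : ℤ) : ℝ)
      - ((k + r + 1 + m : ℕ) : ℝ) - 1 = -N + k := by push_cast; ring
  have key := core' m k r N (M m) x (hM m).1 (hM m).2
  have hA : ((-((k + r + 1 : ℕ) : ℤ) : ℤ) : ℝ) = -((k + r + 1 : ℕ) : ℝ) := by push_cast; ring
  have hB : ((-((m + k + 1 : ℕ) : ℤ) : ℤ) : ℝ) = -((m + k + 1 : ℕ) : ℝ) := by push_cast; ring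
  unfold Hhat
  rw [if_neg (by omega), if_pos ⟨hf1, hf2⟩, e1, e2, e3, e4, e5, e6, hA, hB, neg_neg,
    Int.toNat_natCast, zpow_natCast]
  exact key
end

section
/- Let α ≤ β ≤ −1 be negative integers and let M = (M_i)_{i≥0} be real parameters with M_i ∉ {0,1}. Then for every integer f with −α ≤ f ≤ −α−β−1, the limit lim_{s→0} (1/s)·P_f^{α+s/M_{α+f}, β−s}(x) exists for every x, and P̂_f^{α,β;M}(x) = (M_{α+f}/(M_{α+f}−1)) · lim_{s→0} (1/s)·P_f^{α+s/M_{α+f}, β−s}(x). -/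
open Finset MeasureTheory

lemma gB_choose (z : ℝ) (k : ℕ) : genBinom z k = Ring.choose z k := by
  have h := Ring.descPochhammer_eq_factorial_smul_choose z k
  have h2 : (descPochhammer ℤ k).smeval z = ∏ i ∈ Finset.range k, (z - (i : ℝ)) := by
    rw [← descPochhammer_eval_eq_prod_range, Polynomial.descPochhammer_smeval_eq_ascPochhammer,
      descPochhammer_eval_eq_ascPochhammer, Polynomial.ascPochhammer_smeval_eq_eval]
  rw [h2, nsmul_eq_mul] at h
  unfold genBinom
  rw [h]
  field_simp

lemma gB_nat (N k : ℕ) : genBinom (N : ℝ) k = (N.choose k : ℝ) := by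
  rw [gB_choose, Ring.choose_natCast]

lemma gB_vander (r s : ℝ) (k : ℕ) :
    genBinom (r + s) k = ∑ i ∈ Finset.range (k + 1), genBinom r i * genBinom s (k - i) := by
  simp only [gB_choose]
  rw [Ring.add_choose_eq k (Commute.all r s),
    Finset.Nat.sum_antidiagonal_eq_sum_range_succ_mk]

lemma prod_neg_fact (p k : ℕ) :
    (∏ i ∈ Finset.range k, (-((p : ℝ) + 1) - (i : ℝ))) * (p.factorial : ℝ)
      = (-1) ^ k * ((p + k).factorial : ℝ) := by
  induction k with
  | zero => simp
  | succ k ih =>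
    rw [Finset.prod_range_succ, mul_right_comm, ih, ← add_assoc, Nat.factorial_succ]
    push_cast
    ring

lemma gB_neg (p k : ℕ) : genBinom (-((p : ℝ) + 1)) k
    = (-1) ^ k * ((p + k).factorial : ℝ) / ((p.factorial : ℝ) * (k.factorial : ℝ)) := by
  have := prod_neg_fact p k
  unfold genBinom
  have h1 : (p.factorial : ℝ) ≠ 0 := by positivity
  have h2 : (k.factorial : ℝ) ≠ 0 := by positivity
  rw [← this]
  field_simp

lemma gB_diff (k : ℕ) : Differentiable ℝ (fun z => genBinom z k) := by
  unfold genBinom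
  fun_prop

lemma gB_deriv (A i : ℕ) : deriv (fun z => genBinom z (A + 1 + i)) (A : ℝ)
    = (A.factorial : ℝ) * (-1) ^ i * (i.factorial : ℝ) / ((A + 1 + i).factorial : ℝ) := by
  set g : ℝ → ℝ := fun z => (∏ l ∈ Finset.range A, (z - (l : ℝ))) *
    (∏ l ∈ Finset.range i, (z - ((A + 1 + l : ℕ) : ℝ))) / ((A + 1 + i).factorial : ℝ) with hg
  have hgd : Differentiable ℝ g := by rw [hg]; fun_prop
  have h1 : (fun z => genBinom z (A + 1 + i)) = fun z => (z - (A : ℝ)) * g z := by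
    funext z
    unfold genBinom
    rw [Finset.prod_range_add, Finset.prod_range_succ, hg]
    ring
  have h2 : HasDerivAt (fun z => (z - (A : ℝ)) * g z) (g A) (A : ℝ) := by
    have := ((hasDerivAt_id (A : ℝ)).sub_const (A : ℝ)).mul (hgd (A : ℝ)).hasDerivAt
    exact this.congr_deriv (by simp)
  rw [h1, h2.deriv, hg]
  have e1 : (∏ l ∈ Finset.range A, ((A : ℝ) - (l : ℝ))) = (A.factorial : ℝ) := by
    have := gB_nat A A
    unfold genBinom at this
    rw [Nat.choose_self, div_eq_iff (by positivity)] at this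
    simpa using this
  have e2 : (∏ l ∈ Finset.range i, ((A : ℝ) - ((A + 1 + l : ℕ) : ℝ))) = (-1) ^ i * (i.factorial : ℝ) := by
    have := prod_neg_fact 0 i
    simp only [Nat.factorial_zero, Nat.cast_one, mul_one, zero_add] at this
    rw [← this]
    refine Finset.prod_congr rfl fun l _ => ?_
    push_cast
    ring
  simp only [e1, e2]
  ring

lemma acff (t i : ℕ) : (t + i).choose t * t.factorial * i.factorial = (t + i).factorial := by
  have := Nat.add_choose_mul_factorial_mul_factorial t i
  rwa [← Nat.choose_symm_add] at this

lemma gB_mul_choose (z : ℝ) (t i : ℕ) :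
    genBinom z (t + i) * ((t + i).choose t : ℝ) = genBinom z t * genBinom (z - t) i := by
  have h : (((t + i).choose t : ℝ)) * t.factorial * i.factorial = (t + i).factorial := by
    exact_mod_cast acff t i
  unfold genBinom
  rw [Finset.prod_range_add, ← h]
  have h1 : (t.factorial : ℝ) ≠ 0 := by positivity
  have h2 : (i.factorial : ℝ) ≠ 0 := by positivity
  have h3 : ((t + i).choose t : ℝ) ≠ 0 := by
    have := Nat.choose_pos (Nat.le_add_right t i)
    positivity
  have e : (∏ x ∈ Finset.range i, (z - ((t + x : ℕ) : ℝ))) = ∏ x ∈ Finset.range i, (z - t - (x : ℝ)) :=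
    Finset.prod_congr rfl fun l _ => by push_cast; ring
  rw [e]
  field_simp

lemma jacobi_hyper (a b : ℝ) (n : ℕ) (x : ℝ) :
    jacobiP a b n x = ∑ k ∈ Finset.range (n + 1),
      genBinom (n + a) (n - k) * genBinom (n + a + b + k) k * ((x - 1) / 2) ^ k := by
  set y := (x - 1) / 2 with hy
  have hx1 : x - 1 = 2 * y := by rw [hy]; ring
  have hx2 : x + 1 = 2 * (1 + y) := by rw [hy]; ring
  have step1 : jacobiP a b n x = ∑ j ∈ Finset.range (n + 1),
      ∑ t ∈ Finset.range (j + 1), (fun t i => genBinom (n + a) t * genBinom (n + a - t) i *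
        genBinom (n + b) (n - t - i) * y ^ (n - t)) t (j - t) := by
    unfold jacobiP
    rw [Finset.mul_sum]
    refine Finset.sum_congr rfl fun j hj => ?_
    have hj' : j ≤ n := Nat.lt_succ_iff.mp (Finset.mem_range.mp hj)
    obtain ⟨r, rfl⟩ := Nat.exists_eq_add_of_le hj'
    rw [hx1, hx2, mul_pow, mul_pow, add_pow, Finset.mul_sum, Finset.mul_sum, Finset.mul_sum]
    refine Finset.sum_congr rfl fun t ht => ?_
    have ht' : t ≤ j := Nat.lt_succ_iff.mp (Finset.mem_range.mp ht)
    obtain ⟨i, rfl⟩ := Nat.exists_eq_add_of_le ht'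
    have hm := gB_mul_choose (((t + i + r : ℕ) : ℝ) + a) t i
    have e1 : t + i + r - (t + i) = r := by omega
    have e2 : i + r - i = r := by omega
    have e3 : t + i + r - t = i + r := by omega
    have e4 : t + i - t = i := by omega
    simp only [e1, e3, e4, e2]
    rw [← hm]
    have h2 : ((2 : ℝ)⁻¹) ^ (t + i + r) * (2 ^ r * 2 ^ (t + i)) = 1 := by
      rw [← pow_add, add_comm r, ← mul_pow]; norm_num
    rw [pow_add y i r]
    linear_combination (genBinom (((t + i + r : ℕ) : ℝ) + a) (t + i) * ((t + i).choose t : ℝ) *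
      genBinom (((t + i + r : ℕ) : ℝ) + b) r * y ^ i * y ^ r) * h2
  rw [step1, Finset.sum_range_diag_flip (n + 1) (fun t i => genBinom (n + a) t *
    genBinom (n + a - t) i * genBinom (n + b) (n - t - i) * y ^ (n - t)), ← Finset.sum_range_reflect]
  refine Finset.sum_congr rfl fun k hk => ?_
  have hk' : k ≤ n := Nat.lt_succ_iff.mp (Finset.mem_range.mp hk)
  have e1 : n + 1 - 1 - k = n - k := by omega
  have e2 : n + 1 - (n - k) = k + 1 := by omega
  have e3 : n - (n - k) = k := by omega
  simp only [e1, e2, e3]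
  have hv := gB_vander ((n : ℝ) + a - ((n - k : ℕ) : ℝ)) (n + b) k
  have e4 : (n : ℝ) + a - ((n - k : ℕ) : ℝ) + (n + b) = n + a + b + k := by
    rw [Nat.cast_sub hk']; ring
  rw [e4] at hv
  rw [hv, Finset.mul_sum, Finset.sum_mul]
  refine Finset.sum_congr rfl fun i _ => ?_
  ring

/-- derivative in the first parameter -/
noncomputable def XX (A B : ℝ) (n : ℕ) (x : ℝ) : ℝ := (2 : ℝ)⁻¹ ^ n * ∑ j ∈ Finset.range (n + 1),
    deriv (fun z => genBinom z j) A * genBinom B (n - j) * (x - 1) ^ (n - j) * (x + 1) ^ j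

/-- derivative in the second parameter -/
noncomputable def YY (A B : ℝ) (n : ℕ) (x : ℝ) : ℝ := (2 : ℝ)⁻¹ ^ n * ∑ j ∈ Finset.range (n + 1),
    genBinom A j * deriv (fun z => genBinom z (n - j)) B * (x - 1) ^ (n - j) * (x + 1) ^ j

lemma jacobi_hasDeriv (a b u v : ℝ) (n : ℕ) (x : ℝ) :
    HasDerivAt (fun s : ℝ => jacobiP (a + u * s) (b + v * s) n x)
      (u * XX (n + a) (n + b) n x + v * YY (n + a) (n + b) n x) 0 := by
  unfold jacobiP XX YY
  have key : ∀ (c w : ℝ) (k : ℕ), HasDerivAt (fun s : ℝ => genBinom (n + (c + w * s)) k)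
      (deriv (fun z => genBinom z k) (n + c) * w) 0 := by
    intro c w k
    have h1 : HasDerivAt (fun s : ℝ => (n : ℝ) + (c + w * s)) w 0 := by
      have := (((hasDerivAt_id (0 : ℝ)).const_mul w).const_add c).const_add (n : ℝ)
      simpa using this
    have h2 := (gB_diff k ((n : ℝ) + c)).hasDerivAt
    have h3 : HasDerivAt (fun z => genBinom z k) (deriv (fun z => genBinom z k) (n + c))
      ((n : ℝ) + (c + w * 0)) := by simpa using h2
    exact h3.comp (0 : ℝ) h1
  have h := (HasDerivAt.fun_sum (u := Finset.range (n + 1)) fun j _ =>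
    ((((key a u j).mul (key b v (n - j))).mul_const ((x - 1) ^ (n - j))).mul_const
      ((x + 1) ^ j))).const_mul ((2 : ℝ)⁻¹ ^ n)
  refine h.congr_deriv ?_
  simp only [Finset.mul_sum]
  rw [← Finset.sum_add_distrib]
  refine Finset.sum_congr rfl fun j _ => ?_
  simp only [mul_zero, add_zero]
  ring

lemma claimXY (A B m : ℕ) (x : ℝ) :
    XX A B (A + B + m + 1) x - YY A B (A + B + m + 1) x =
      (-1) ^ (A + m + 1 + (A + B + m + 1)) * (A.factorial * B.factorial * m.factorial : ℝ)
        / ((A + B + m + 1).factorial : ℝ) *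
      jacobiP (-((B : ℝ) + m + 1)) (-((A : ℝ) + m + 1)) m x := by
  set n := A + B + m + 1 with hn
  have hnr : (n : ℝ) = A + B + m + 1 := by rw [hn]; push_cast; ring
  set a : ℝ := -((B : ℝ) + m + 1) with ha
  set b : ℝ := -((A : ℝ) + m + 1) with hb
  have hA : (n : ℝ) + a = A := by rw [hnr, ha]; ring
  have hB : (n : ℝ) + b = B := by rw [hnr, hb]; ring
  have h1 := jacobi_hasDeriv a b 1 (-1) n x
  rw [hA, hB] at h1
  have h2 : HasDerivAt (fun s : ℝ => jacobiP (a + 1 * s) (b + (-1) * s) n x)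
      (∑ k ∈ Finset.range (n + 1), deriv (fun z => genBinom z (n - k)) A *
        genBinom (n + a + b + k) k * ((x - 1) / 2) ^ k) 0 := by
    have e : (fun s : ℝ => jacobiP (a + 1 * s) (b + (-1) * s) n x) = fun s : ℝ =>
        ∑ k ∈ Finset.range (n + 1), genBinom (A + s) (n - k) *
          genBinom (n + a + b + k) k * ((x - 1) / 2) ^ k := by
      funext s
      rw [jacobi_hyper]
      refine Finset.sum_congr rfl fun k _ => ?_
      have e1 : (n : ℝ) + (a + 1 * s) = A + s := by rw [← hA]; ring
      have e2 : (A : ℝ) + s + (b + -1 * s) + k = n + a + b + k := by rw [← hA]; ring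
      rw [e1, e2]
    rw [e]
    refine HasDerivAt.fun_sum fun k _ => ?_
    refine HasDerivAt.mul_const (HasDerivAt.mul_const ?_ _) _
    have h3 : HasDerivAt (fun z => genBinom z (n - k)) (deriv (fun z => genBinom z (n - k)) A)
      ((A : ℝ) + 0) := by simpa using (gB_diff (n - k) (A : ℝ)).hasDerivAt
    have h4 : HasDerivAt (fun s : ℝ => (A : ℝ) + s) 1 0 := by
      simpa using (hasDerivAt_id (0 : ℝ)).const_add (A : ℝ)
    exact (h3.comp (0 : ℝ) h4).congr_deriv (by simp)
  have h3 := h1.unique h2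
  have h4 : XX A B n x - YY A B n x = 1 * XX A B n x + -1 * YY A B n x := by ring
  rw [h4, h3, jacobi_hyper, Finset.mul_sum]
  symm
  have hsub : Finset.range (m + 1) ⊆ Finset.range (n + 1) :=
    Finset.range_subset_range.mpr (by omega)
  rw [← Finset.sum_subset hsub]
  · refine Finset.sum_congr rfl fun k hk => ?_
    have hk' : k ≤ m := Nat.lt_succ_iff.mp (Finset.mem_range.mp hk)
    obtain ⟨p, rfl⟩ := Nat.exists_eq_add_of_le hk'
    have e1 : n - k = A + 1 + (B + p) := by omega
    have e2 : k + p - k = p := by omega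
    have e3 : (n : ℝ) + a + b + k = -((p : ℝ) + 1) := by
      rw [hA, hb]; push_cast; ring
    have e4 : ((k + p : ℕ) : ℝ) + a = -((B : ℝ) + 1) := by rw [ha]; ring
    have e5 : ((k + p : ℕ) : ℝ) + a + b + k = -(((A + 1 + (B + p) : ℕ) : ℝ) + 1) := by
      rw [e4, hb]; push_cast; ring
    have e6 : A + 1 + (B + p) + k = n := by omega
    rw [e5, e4, e3, e2, e1, gB_deriv, gB_neg, gB_neg, gB_neg, e6]
    have e7 : (A + (k + p) + 1 + n) = A + (A + (k + p) + 1 + (A + B) + (k + p) + 1 - A) := by omega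
    have e8 : (-1 : ℝ) ^ (A + (k + p) + 1 + n) = (-1) ^ B := by
      have : A + (k + p) + 1 + n = B + 2 * (A + (k + p) + 1) := by omega
      rw [this, pow_add, pow_mul]; simp
    have e9 : p + k = k + p := add_comm _ _
    rw [e8, e9]
    have f1 : (n.factorial : ℝ) ≠ 0 := by positivity
    have f2 : ((k + p).factorial : ℝ) ≠ 0 := by positivity
    have f3 : (k.factorial : ℝ) ≠ 0 := by positivity
    have f4 : (p.factorial : ℝ) ≠ 0 := by positivity
    have f5 : (B.factorial : ℝ) ≠ 0 := by positivity
    have f6 : ((A + 1 + (B + p)).factorial : ℝ) ≠ 0 := by positivity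
    field_simp
    ring
  · intro k _ hk
    have hk' : m + 1 ≤ k := by simpa using hk
    obtain ⟨p, rfl⟩ := Nat.exists_eq_add_of_le hk'
    have e3 : (n : ℝ) + a + b + ((m + 1 + p : ℕ) : ℝ) = (p : ℝ) := by
      rw [hA, hb]; push_cast; ring
    rw [e3, gB_nat, Nat.choose_eq_zero_of_lt (by omega)]
    simp

lemma claimY (A B m : ℕ) (x : ℝ) :
    - YY A B (A + B + m + 1) x =
      (-1) ^ (A + m + 1 + (A + B + m + 1)) * (A.factorial * B.factorial * m.factorial : ℝ)
        / ((A + B + m + 1).factorial : ℝ) *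
      (((1 - x) / 2) ^ (B + m + 1) * jacobiP ((B : ℝ) + m + 1) (-((A : ℝ) + m + 1)) A x) := by
  set n := A + B + m + 1 with hn
  unfold YY jacobiP
  have hsub : Finset.range (A + 1) ⊆ Finset.range (n + 1) :=
    Finset.range_subset_range.mpr (by omega)
  rw [← Finset.sum_subset hsub]
  · simp only [Finset.mul_sum]
    rw [← Finset.sum_neg_distrib]
    refine Finset.sum_congr rfl fun j hj => ?_
    have hj' : j ≤ A := Nat.lt_succ_iff.mp (Finset.mem_range.mp hj)
    obtain ⟨p, rfl⟩ := Nat.exists_eq_add_of_le hj'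
    have e1 : n - j = B + 1 + (m + p) := by omega
    have e2 : j + p - j = p := by omega
    have e3 : ((j + p : ℕ) : ℝ) + -(((j + p : ℕ) : ℝ) + m + 1) = -((m : ℝ) + 1) := by ring
    have e4 : ((j + p : ℕ) : ℝ) + ((B : ℝ) + m + 1) = (n : ℝ) := by rw [hn]; push_cast; ring
    rw [e4, e3, e2, e1, gB_deriv, gB_neg, gB_nat, gB_nat]
    have c1 : (((j + p).choose j : ℕ) : ℝ) * j.factorial * p.factorial = (j + p).factorial := by
      exact_mod_cast acff j p
    have hnj : n = j + (B + 1 + (m + p)) := by omega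
    have c2 : ((n.choose j : ℕ) : ℝ) * j.factorial * (B + 1 + (m + p)).factorial = n.factorial := by
      rw [hnj]
      exact_mod_cast acff j (B + 1 + (m + p))
    have f1 : (n.factorial : ℝ) ≠ 0 := by positivity
    have f2 : ((j + p).factorial : ℝ) ≠ 0 := by positivity
    have f3 : (j.factorial : ℝ) ≠ 0 := by positivity
    have f4 : (p.factorial : ℝ) ≠ 0 := by positivity
    have f5 : (m.factorial : ℝ) ≠ 0 := by positivity
    have f6 : ((B + 1 + (m + p)).factorial : ℝ) ≠ 0 := by positivity
    have c1' : (((j + p).choose j : ℕ) : ℝ) = (j + p).factorial / (j.factorial * p.factorial) := by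
      rw [eq_div_iff (by positivity), ← c1]; ring
    have c2' : ((n.choose j : ℕ) : ℝ) = n.factorial / (j.factorial * (B + 1 + (m + p)).factorial) := by
      rw [eq_div_iff (by positivity), ← c2]; ring
    rw [c1', c2']
    have e8 : (-1 : ℝ) ^ (j + p + m + 1 + n) = (-1) ^ B := by
      have : j + p + m + 1 + n = B + 2 * (j + p + m + 1) := by omega
      rw [this, pow_add, pow_mul]; simp
    have e9 : ((1 - x) / 2) ^ (B + m + 1) = (-1) ^ (B + m + 1) * (x - 1) ^ (B + m + 1) *
        (2⁻¹) ^ (B + m + 1) := by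
      rw [← mul_pow, ← mul_pow]; congr 1; ring
    have e10 : (2⁻¹ : ℝ) ^ n = (2⁻¹) ^ (B + m + 1) * (2⁻¹) ^ (j + p) := by
      rw [← pow_add]; congr 1; omega
    have e11 : (x - 1) ^ (B + 1 + (m + p)) = (x - 1) ^ (B + m + 1) * (x - 1) ^ p := by
      rw [← pow_add]; congr 1; omega
    have e12 : (-1 : ℝ) ^ B * (-1) ^ (B + m + 1) = - (-1) ^ m := by
      rw [← pow_add, show B + (B + m + 1) = 2 * B + (m + 1) by omega, pow_add, pow_mul]
      simp [pow_succ]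
    rw [e8, e9, e10, e11]
    generalize (x - 1) ^ (B + m + 1) = w1
    generalize (2⁻¹ : ℝ) ^ (B + m + 1) = w2
    generalize (2⁻¹ : ℝ) ^ (j + p) = w3
    generalize (x - 1) ^ p = w4
    rw [pow_add (-1 : ℝ) m p]
    generalize hw5 : (-1 : ℝ) ^ (B + m + 1) = w5 at *
    generalize hw6 : (-1 : ℝ) ^ m = w6 at *
    have : w6 = - ((-1) ^ B * w5) := by rw [e12]; ring
    rw [this]
    field_simp
  · intro j _ hj
    have hj' : A + 1 ≤ j := by simpa using hj
    rw [gB_nat, Nat.choose_eq_zero_of_lt (by omega)]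
    simp

lemma jacobi_zero (A B m : ℕ) (x : ℝ) :
    jacobiP (-((B : ℝ) + m + 1)) (-((A : ℝ) + m + 1)) (A + B + m + 1) x = 0 := by
  unfold jacobiP
  rw [Finset.sum_eq_zero, mul_zero]
  intro j hj
  have e1 : ((A + B + m + 1 : ℕ) : ℝ) + -((B : ℝ) + m + 1) = A := by push_cast; ring
  have e2 : ((A + B + m + 1 : ℕ) : ℝ) + -((A : ℝ) + m + 1) = B := by push_cast; ring
  rw [e1, e2, gB_nat, gB_nat]
  rcases lt_or_ge A j with h | h
  · rw [Nat.choose_eq_zero_of_lt h]; simp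
  · rw [Nat.choose_eq_zero_of_lt (show B < A + B + m + 1 - j by omega)]; simp


/-- `P̂_f^{α,β;M}` as a limit of Jacobi polynomials (middle range). -/
theorem Phat_middle_as_limit
    (α β : ℤ) (M : ℕ → ℝ)
    (hαβ : α ≤ β) (hβ : β ≤ -1)
    (hM : ∀ i, M i ≠ 0 ∧ M i ≠ 1)
    (f : ℕ) (hf1 : -α ≤ (f : ℤ)) (hf2 : (f : ℤ) ≤ -α - β - 1) (x : ℝ) :
    Filter.Tendsto
      (fun s : ℝ => s⁻¹ * jacobiP ((α : ℝ) + s / M ((α + (f : ℤ)).toNat)) ((β : ℝ) - s) f x)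
      (nhdsWithin 0 {s : ℝ | s ≠ 0})
      (nhds ((M ((α + (f : ℤ)).toNat) - 1) / M ((α + (f : ℤ)).toNat) * Phat α β M f x)) := by
  obtain ⟨A, hA⟩ := Int.eq_ofNat_of_zero_le (show 0 ≤ α + (f : ℤ) by omega)
  obtain ⟨B, hB⟩ := Int.eq_ofNat_of_zero_le (show 0 ≤ β + (f : ℤ) by omega)
  obtain ⟨m, hm⟩ := Int.eq_ofNat_of_zero_le (show 0 ≤ -α - β - (f : ℤ) - 1 by omega)
  have hf : f = A + B + m + 1 := by omega
  have hα : α = -((B : ℤ) + m + 1) := by omega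
  have hβ' : β = -((A : ℤ) + m + 1) := by omega
  have hαr : (α : ℝ) = -((B : ℝ) + m + 1) := by rw [hα]; push_cast; ring
  have hβr : (β : ℝ) = -((A : ℝ) + m + 1) := by rw [hβ']; push_cast; ring
  have hP : Phat α β M f x =
      (-1 : ℝ) ^ (A + m + 1 + (A + B + m + 1)) *
        (A.factorial * B.factorial * m.factorial : ℝ) / ((A + B + m + 1).factorial : ℝ) *
      ((M A - 1)⁻¹ * jacobiP (-((B : ℝ) + m + 1)) (-((A : ℝ) + m + 1)) m x +
        ((1 - x) / 2) ^ (B + m + 1) * jacobiP ((B : ℝ) + m + 1) (-((A : ℝ) + m + 1)) A x) := by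
    unfold Phat
    rw [if_neg (by omega), if_pos ⟨hf1, hf2⟩]
    have t1 : (α + (f : ℤ)).toNat = A := by omega
    have t2 : ((f : ℤ) + α).toNat = A := by omega
    have t3 : ((f : ℤ) + β).toNat = B := by omega
    have t4 : (-α - β - (f : ℤ) - 1).toNat = m := by omega
    have t5 : (-α).toNat = B + m + 1 := by omega
    have t6 : (-1 : ℝ) ^ (β + (f : ℤ)) = (-1) ^ (A + m + 1 + (A + B + m + 1)) := by
      rw [hB, show A + m + 1 + (A + B + m + 1) = B + 2 * (A + m + 1) by omega, pow_add, pow_mul]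
      simp
    rw [t1, t2, t3, t4, t5, t6, hαr, hβr, hf, neg_neg]
  have t1 : (α + (f : ℤ)).toNat = A := by omega
  rw [t1, hP, hαr, hβr, hf]
  obtain ⟨hM0, hM1⟩ := hM A
  have hd := jacobi_hasDeriv (-((B : ℝ) + m + 1)) (-((A : ℝ) + m + 1)) (M A)⁻¹ (-1)
    (A + B + m + 1) x
  have e1 : ((A + B + m + 1 : ℕ) : ℝ) + -((B : ℝ) + m + 1) = A := by push_cast; ring
  have e2 : ((A + B + m + 1 : ℕ) : ℝ) + -((A : ℝ) + m + 1) = B := by push_cast; ring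
  rw [e1, e2] at hd
  have ht := hasDerivAt_iff_tendsto_slope.mp hd
  have c1 := claimXY A B m x
  have c2 := claimY A B m x
  have hfun : (fun s : ℝ => s⁻¹ * jacobiP (-((B : ℝ) + m + 1) + s / M A)
      (-((A : ℝ) + m + 1) - s) (A + B + m + 1) x) =
      slope (fun s : ℝ => jacobiP (-((B : ℝ) + m + 1) + (M A)⁻¹ * s)
        (-((A : ℝ) + m + 1) + (-1) * s) (A + B + m + 1) x) 0 := by
    funext s
    rw [slope_def_field]
    simp only [mul_zero, add_zero, jacobi_zero, sub_zero]
    rw [div_eq_inv_mul _ s, div_eq_inv_mul, neg_one_mul, ← sub_eq_add_neg]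
  rw [hfun]
  have hval : (M A)⁻¹ * XX A B (A + B + m + 1) x + -1 * YY A B (A + B + m + 1) x =
      (M A)⁻¹ * (XX A B (A + B + m + 1) x - YY A B (A + B + m + 1) x) +
        (1 - (M A)⁻¹) * (- YY A B (A + B + m + 1) x) := by ring
  rw [hval, c1, c2] at ht
  have hM1' : M A - 1 ≠ 0 := sub_ne_zero.mpr hM1
  have hS : nhdsWithin (0 : ℝ) {s : ℝ | s ≠ 0} = nhdsWithin 0 {0}ᶜ := rfl
  rw [hS]
  refine ht.trans (le_of_eq ?_)
  congr 1
  field_simp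
  try ring
end
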